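/- Let n ≥ 9 be an integer and let G be a subgroup of the symmetric group S_n with G ≠ S_n and G ≠ A_n. Then either G has index n or index 2n in S_n and fixes some element of {1, …, n} (i.e., there exists i ∈ {1, …, n} with σ(i) = i for all σ ∈ G), or G has index at least n(n−1)/2 in S_n. -/

import Mathlib

/-!
Split according to how `G` acts on the `n` points. If `G` fixes a point, it is a subgroup of
`S_{n-1}`, all of whose proper subgroups other than `A_{n-1}` have index at least `n - 1`. If `G`
is intransitive without fixed points, it preserves a set of `k` points with `2 ≤ k ≤ n - 2`, so
`n.choose k` divides its index. If `G` is transitive and preserves a partition into `b` blocks of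
size `a`, the number of such partitions divides its index. If `G` is primitive, it contains no
3-cycle by Jordan's theorem, so every base of `G` of minimal size has at most half of the points
(Bochert); the symmetric group on the complement of this base meets `G` trivially, so the index of
`G` is at least `⌈n / 2⌉!`.
-/

open Equiv MulAction

open scoped Nat Pointwise commutatorElement

section Arithmetic

theorem choose_le_choose_of_le_half {n j k : ℕ} (hjk : j ≤ k) (hk : 2 * k ≤ n) :
    n.choose j ≤ n.choose k := by
  induction k, hjk using Nat.le_induction with
  | base => exact le_rfl
  | succ k _ ih => exact (ih (by lia)).trans (Nat.choose_le_succ_of_lt_half_left (by lia))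

theorem choose_two_le_choose {n k : ℕ} (h2 : 2 ≤ k) (hk : k + 2 ≤ n) :
    n.choose 2 ≤ n.choose k := by
  rcases le_total (2 * k) n with h | h
  · exact choose_le_choose_of_le_half h2 h
  · rw [← Nat.choose_symm (show k ≤ n by lia)]
    exact choose_le_choose_of_le_half (by lia) (by lia)

theorem succ_choose_two_le_choose_three {m : ℕ} (hm : 7 ≤ m) :
    (m + 1).choose 2 ≤ m.choose 3 := by
  obtain ⟨k, rfl⟩ := Nat.exists_eq_add_of_le' hm
  have pascal : (k + 7 + 1).choose 2 = (k + 7).choose 1 + (k + 7).choose 2 :=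
    Nat.choose_succ_succ' _ _
  have choose_two : (k + 7).choose 2 * 2 = (k + 7).choose 1 * (k + 6) :=
    Nat.choose_succ_right_eq _ _
  have choose_three : (k + 7).choose 3 * 3 = (k + 7).choose 2 * (k + 5) :=
    Nat.choose_succ_right_eq _ _
  rw [Nat.choose_one_right] at pascal choose_two
  nlinarith

theorem choose_two_le_factorial_half {n : ℕ} (hn : 9 ≤ n) : n.choose 2 ≤ ((n + 1) / 2)! := by
  obtain ⟨k, hk⟩ : ∃ k, (n + 1) / 2 = k + 5 := Nat.exists_eq_add_of_le' (by lia)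
  calc n.choose 2 ≤ (2 * (k + 5)).choose 2 := Nat.choose_le_choose 2 (by lia)
    _ = (k + 5) * (2 * k + 9) := by
      rw [Nat.choose_two_right, mul_assoc, Nat.mul_div_cancel_left _ two_pos]; rfl
    _ ≤ (k + 5) * ((k + 4) * (k + 3)) := by gcongr; nlinarith
    _ ≤ (k + 5) * ((k + 4) * ((k + 3) * (k + 2)!)) := by
      gcongr; exact Nat.le_mul_of_pos_right _ (Nat.factorial_pos _)
    _ = ((n + 1) / 2)! := by rw [hk]; simp only [Nat.factorial_succ]

theorem uniformBell_pos (m : ℕ) {a : ℕ} (ha : a ≠ 0) : 0 < m.uniformBell a :=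
  Nat.pos_of_mul_pos_right <| Nat.pos_of_mul_pos_right <|
    (Nat.uniformBell_mul_eq m ha).symm ▸ Nat.factorial_pos _

theorem choose_two_le_uniformBell_two {c : ℕ} (hc : 2 ≤ c) :
    ((c + 2) * 2).choose 2 ≤ (c + 2).uniformBell 2 :=
  calc ((c + 2) * 2).choose 2 = (2 * c + 3) * (c + 2) := by
        rw [Nat.choose_two_right, show (c + 2) * 2 - 1 = 2 * c + 3 by lia, mul_right_comm,
          Nat.mul_div_cancel _ two_pos, mul_comm]
    _ ≤ (2 * c + 3) * ((2 * c + 1) * c.uniformBell 2) := by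
        gcongr
        exact (show c + 2 ≤ 2 * c + 1 by lia).trans
          (Nat.le_mul_of_pos_right _ (uniformBell_pos c two_ne_zero))
    _ = (c + 2).uniformBell 2 := by
        rw [Nat.uniformBell_succ_left, Nat.uniformBell_succ_left,
          show (c + 1) * 2 + 2 - 1 = 2 * c + 3 by lia, show c * 2 + 2 - 1 = 2 * c + 1 by lia,
          Nat.choose_one_right, Nat.choose_one_right]

theorem choose_two_le_uniformBell_three {c : ℕ} (hc : 1 ≤ c) :
    ((c + 2) * 3).choose 2 ≤ (c + 2).uniformBell 3 := by
  have linear_le : 3 * c + 5 ≤ (3 * c + 5).choose 2 :=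
    (Nat.choose_one_right _).symm.trans_le
      (choose_le_choose_of_le_half one_le_two (by lia))
  have two_le : 2 ≤ (3 * c + 2).choose 2 :=
    le_trans (by decide) (Nat.choose_le_choose 2 (show 5 ≤ 3 * c + 2 by lia))
  calc ((c + 2) * 3).choose 2 = 3 * c + 5 + (3 * c + 5).choose 2 := by
        rw [add_mul, mul_comm c, Nat.choose_succ_succ' (3 * c + 5) 1, Nat.choose_one_right]
    _ ≤ (3 * c + 5).choose 2 * 2 := by lia
    _ ≤ (3 * c + 5).choose 2 * ((3 * c + 2).choose 2 * c.uniformBell 3) := by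
        gcongr
        exact two_le.trans (Nat.le_mul_of_pos_right _ (uniformBell_pos c three_ne_zero))
    _ = (c + 2).uniformBell 3 := by
        rw [Nat.uniformBell_succ_left, Nat.uniformBell_succ_left,
          show (c + 1) * 3 + 3 - 1 = 3 * c + 5 by lia, show c * 3 + 3 - 1 = 3 * c + 2 by lia]

theorem choose_two_le_uniformBell_of_four_le {a c : ℕ} (ha : 4 ≤ a) :
    ((c + 2) * a).choose 2 ≤ (c + 2).uniformBell a := by
  have pred_add_one : (c + 2) * a = (c + 1) * a + a - 1 + 1 := by lia
  calc ((c + 2) * a).choose 2 ≤ ((c + 1) * a + a - 1).choose 3 := by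
        rw [pred_add_one]; exact succ_choose_two_le_choose_three (by lia)
    _ ≤ ((c + 1) * a + a - 1).choose (a - 1) := choose_le_choose_of_le_half (by lia) (by lia)
    _ ≤ (c + 2).uniformBell a := by
        rw [Nat.uniformBell_succ_left]
        exact Nat.le_mul_of_pos_right _ (uniformBell_pos _ (by lia))

theorem choose_two_le_uniformBell {a b : ℕ} (ha : 2 ≤ a) (hb : 2 ≤ b) (hab : 7 ≤ b * a) :
    (b * a).choose 2 ≤ b.uniformBell a := by
  obtain ⟨c, rfl⟩ := Nat.exists_eq_add_of_le' hb
  obtain rfl | rfl | ha4 : a = 2 ∨ a = 3 ∨ 4 ≤ a := by lia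
  · exact choose_two_le_uniformBell_two (by lia)
  · exact choose_two_le_uniformBell_three (by lia)
  · exact choose_two_le_uniformBell_of_four_le ha4

end Arithmetic

section Intransitive

variable {α : Type*}

theorem index_stabilizer_set [Finite α] (s : Set α) :
    (stabilizer (Perm α) s).index = (Nat.card α).choose s.ncard := by
  classical
  let t : Set.powersetCard α s.ncard :=
    ⟨s.toFinite.toFinset, (Set.ncard_eq_toFinset_card s).symm⟩
  have ht : stabilizer (Perm α) t = stabilizer (Perm α) s := by
    rw [Set.powersetCard.stabilizer_coe]
    exact congrArg (stabilizer (Perm α)) s.toFinite.coe_toFinset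
  have : IsPretransitive (Perm α) (Set.powersetCard α s.ncard) :=
    Set.powersetCard.isPretransitive
  rw [← ht, index_stabilizer_of_transitive, Set.powersetCard.card]

theorem exists_subset_stabilizer_of_not_isPretransitive {G : Type*} [Group G] [MulAction G α]
    (hfix : fixedPoints G α = ∅) (htrans : ¬ IsPretransitive G α) :
    ∃ s : Set α, stabilizer G s = ⊤ ∧ s.Nontrivial ∧ sᶜ.Nontrivial := by
  have orbit_nontrivial (x : α) : (orbit G x).Nontrivial := by
    rw [← Set.not_subsingleton_iff, subsingleton_orbit_iff_mem_fixedPoints, hfix]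
    exact Set.notMem_empty x
  obtain ⟨x, y, hxy⟩ : ∃ x y : α, y ∉ orbit G x := by
    by_contra! h
    exact htrans ⟨h⟩
  have hdisj : Disjoint (orbit G y) (orbit G x) :=
    (orbit.eq_or_disjoint y x).resolve_left fun h => hxy (h ▸ mem_orbit_self y)
  refine ⟨orbit G x, ?_, orbit_nontrivial x,
    (orbit_nontrivial y).mono hdisj.subset_compl_right⟩
  exact (Subgroup.eq_top_iff' _).2 fun g => smul_orbit g x

theorem choose_two_le_index_of_not_isPretransitive [Finite α] {G : Subgroup (Perm α)}
    (hfix : fixedPoints G α = ∅) (htrans : ¬ IsPretransitive G α) :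
    (Nat.card α).choose 2 ≤ G.index := by
  obtain ⟨s, hs, hs2, hsc2⟩ := exists_subset_stabilizer_of_not_isPretransitive hfix htrans
  have le_stabilizer : G ≤ stabilizer (Perm α) s := fun g hg =>
    show (⟨g, hg⟩ : G) ∈ stabilizer G s from hs ▸ Subgroup.mem_top _
  have choose_dvd : (Nat.card α).choose s.ncard ∣ G.index := by
    rw [← index_stabilizer_set]
    exact Subgroup.index_dvd_of_le le_stabilizer
  have two_le : 2 ≤ s.ncard := Set.one_lt_ncard_iff_nontrivial.2 hs2
  have two_le_compl : 2 ≤ sᶜ.ncard := Set.one_lt_ncard_iff_nontrivial.2 hsc2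
  have card_eq : s.ncard + sᶜ.ncard = Nat.card α := Set.ncard_add_ncard_compl s
  exact (choose_two_le_choose two_le (by lia)).trans
    (Nat.le_of_dvd (Nat.pos_of_ne_zero G.index_ne_zero_of_finite) choose_dvd)

end Intransitive

section Primitive

variable {α : Type*}

/-- `B` is a base of the permutation group `G`: only the identity of `G` fixes `B` pointwise.
A small base forces a large index, because `G` then meets the symmetric group on `Bᶜ` trivially. -/
def IsBase (G : Subgroup (Perm α)) (B : Set α) : Prop :=
  fixingSubgroup G B = ⊥

theorem isBase_iff {G : Subgroup (Perm α)} {B : Set α} :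
    IsBase G B ↔ ∀ g ∈ G, (∀ x ∈ B, g x = x) → g = 1 := by
  simp only [IsBase, Subgroup.eq_bot_iff_forall, mem_fixingSubgroup_iff, Subtype.forall,
    Subgroup.mk_smul, Perm.smul_def, Subgroup.mk_eq_one]

theorem IsBase.factorial_le_index [Finite α] {G : Subgroup (Perm α)} {B : Set α}
    (hB : IsBase G B) : (Bᶜ.ncard)! ≤ G.index := by
  classical
  let f : Perm (Bᶜ : Set α) →* Perm α := Perm.ofSubtype
  have hf : G.comap f = ⊥ := (Subgroup.eq_bot_iff_forall _).2 fun σ hσ => by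
    refine (map_eq_one_iff f Perm.ofSubtype_injective).1 (isBase_iff.1 hB _ hσ fun x hx => ?_)
    exact Perm.ofSubtype_apply_of_not_mem σ (not_not.2 hx)
  calc (Bᶜ.ncard)! = (G.comap f).index := by
        rw [hf, Subgroup.index_bot, Nat.card_perm, Nat.card_coe_set_eq]
    _ = G.relIndex f.range := Subgroup.index_comap G f
    _ ≤ G.relIndex ⊤ := Subgroup.relIndex_le_of_le_right le_top
        (by rw [Subgroup.relIndex_top_right]; exact Subgroup.index_ne_zero_of_finite)
    _ = G.index := Subgroup.relIndex_top_right G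

variable [Fintype α] [DecidableEq α] {G : Subgroup (Perm α)}

theorem isThreeCycle_commutatorElement {g h : Perm α} {d : α}
    (hd : {x | g x ≠ x ∧ h x ≠ x} = {d}) : ⁅g, h⁆.IsThreeCycle := by
  have common_iff (x : α) : g x ≠ x ∧ h x ≠ x ↔ x = d := Set.ext_iff.1 hd x
  have g_inj (x y : α) : g x = g y ↔ x = y := g.injective.eq_iff
  have h_inj (x y : α) : h x = h y ↔ x = y := h.injective.eq_iff
  clear hd
  have g_hd : g (h d) = h d := by grind
  have gd_ne_hd : g d ≠ h d := by grind
  have eq_swap_mul_swap : ⁅g, h⁆ = swap d (h d) * swap d (g d) := by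
    rw [commutatorElement_def, mul_inv_eq_iff_eq_mul, mul_inv_eq_iff_eq_mul]
    ext x
    simp only [Perm.mul_apply, swap_apply_def]
    grind
  rw [eq_swap_mul_swap]
  exact Perm.isThreeCycle_swap_mul_swap_same (by grind) (by grind) gd_ne_hd.symm

-- Neither `Bᶜ` nor `B \ {d}` is a base, so some nontrivial `g` and `h` in `G` are supported in `B`
-- and in `insert d Bᶜ`; choosing `d` in the support of `g` makes `⁅g, h⁆` a 3-cycle.
theorem exists_isThreeCycle_of_minimal_base {B : Set α} (hB : IsBase G B)
    (hmin : ∀ C : Set α, IsBase G C → B.ncard ≤ C.ncard) (hcard : Bᶜ.ncard < B.ncard) :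
    ∃ c ∈ G, c.IsThreeCycle := by
  have exists_ne_one {C : Set α} (hC : C.ncard < B.ncard) :
      ∃ g ∈ G, (∀ x ∈ C, g x = x) ∧ g ≠ 1 := by
    by_contra! h
    exact hC.not_ge (hmin C (isBase_iff.2 h))
  obtain ⟨g, hgG, g_fix, hg1⟩ := exists_ne_one hcard
  obtain ⟨d, hdB, hgd⟩ : ∃ d ∈ B, g d ≠ d := by
    by_contra! h
    exact hg1 (isBase_iff.1 hB g hgG h)
  obtain ⟨h, hhG, h_fix, hh1⟩ := exists_ne_one (Set.ncard_sdiff_singleton_lt_of_mem hdB)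
  have hhd : h d ≠ d := fun hd => hh1 (isBase_iff.1 hB h hhG (by grind))
  have common : {x | g x ≠ x ∧ h x ≠ x} = {d} := by grind
  exact ⟨⁅g, h⁆, mul_mem (mul_mem (mul_mem hgG hhG) (inv_mem hgG)) (inv_mem hhG),
    isThreeCycle_commutatorElement common⟩

theorem factorial_half_le_index (hG : ∀ c ∈ G, ¬ c.IsThreeCycle) :
    ((Nat.card α + 1) / 2)! ≤ G.index := by
  have base_univ : IsBase G Set.univ :=
    isBase_iff.2 fun g _ hg => Perm.ext fun x => hg x (Set.mem_univ x)
  obtain ⟨B, hB, hmin⟩ := Set.exists_min_image {B : Set α | IsBase G B} Set.ncard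
    (Set.toFinite _) ⟨Set.univ, base_univ⟩
  have half_le : (Nat.card α + 1) / 2 ≤ Bᶜ.ncard := by
    by_contra! hlt
    have card_eq : B.ncard + Bᶜ.ncard = Nat.card α := Set.ncard_add_ncard_compl B
    obtain ⟨c, hc, h3⟩ := exists_isThreeCycle_of_minimal_base hB hmin (by lia)
    exact hG c hc h3
  exact (Nat.factorial_le half_le).trans hB.factorial_le_index

theorem choose_two_le_index_of_isPreprimitive [IsPreprimitive G α] (hα : 9 ≤ Nat.card α)
    (hG : ¬ alternatingGroup α ≤ G) : (Nat.card α).choose 2 ≤ G.index :=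
  (choose_two_le_factorial_half hα).trans <| factorial_half_le_index fun _ hc h3 =>
    hG (Perm.alternatingGroup_le_of_isPreprimitive_of_isThreeCycle_mem inferInstance h3 hc)

end Primitive

section Imprimitive

variable {G α β : Type*} [Group G] [MulAction G α]

theorem card_dvd_of_mulActionHom [FaithfulSMul G α] [MulAction G β] [Finite α] [Finite β]
    (f : α →[G] β) {a : ℕ} (hf : ∀ y, Nat.card {x // f x = y} = a) :
    Nat.card G ∣ a ! ^ Nat.card β * (Nat.card β)! := by
  cases nonempty_fintype β
  let onBlocks : G →* Perm β := toPermHom G β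
  have fiber_iff (g : onBlocks.ker) (x : α) (y : β) : f (g • x) = y ↔ f x = y := by
    have hg : (g : G) • f x = f x := DFunLike.congr_fun (MonoidHom.mem_ker.1 g.2) (f x)
    rw [Subgroup.smul_def, map_smul, hg]
  let onFibers : onBlocks.ker →* ∀ y, Perm {x // f x = y} :=
    { toFun g y := (toPerm g).subtypePerm (fiber_iff g · y)
      map_one' := by ext y x; exact one_smul G x.1
      map_mul' g h := by ext y x; exact mul_smul g h x.1 }
  have onFibers_injective : Function.Injective onFibers := fun g h hgh => by
    refine Subtype.ext (eq_of_smul_eq_smul (α := α) fun x => ?_)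
    exact congrArg Subtype.val (DFunLike.congr_fun (congrFun hgh (f x)) ⟨x, rfl⟩)
  rw [← onBlocks.ker.card_mul_index, Subgroup.index_ker]
  refine mul_dvd_mul ?_ ?_
  · have := Subgroup.card_dvd_of_injective onFibers onFibers_injective
    simpa [Nat.card_pi, Nat.card_perm, hf] using this
  · have := Subgroup.card_subgroup_dvd_card onBlocks.range
    rwa [Nat.card_perm] at this

theorem exists_mulActionHom_orbit_of_isBlock [IsPretransitive G α] {B : Set α}
    (hB : IsBlock G B) (hne : B.Nonempty) :
    ∃ f : α →[G] orbit G B, ∀ x C, f x = C ↔ x ∈ (C : Set α) := by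
  have exists_unique (x : α) : ∃! C : orbit G B, x ∈ (C : Set α) := by
    obtain ⟨C, ⟨hC, hxC⟩, huniq⟩ := (hB.isBlockSystem hne).1.2 x
    exact ⟨⟨C, hC⟩, hxC, fun D hxD => Subtype.ext (huniq D ⟨D.2, hxD⟩)⟩
  choose f mem_f huniq using exists_unique
  have eq_iff (x : α) (C : orbit G B) : f x = C ↔ x ∈ (C : Set α) :=
    ⟨fun h => h ▸ mem_f x, fun h => (huniq x C h).symm⟩
  refine ⟨⟨f, fun g x => (eq_iff _ _).2 ?_⟩, eq_iff⟩
  exact Set.smul_mem_smul_set (mem_f x)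

theorem uniformBell_dvd_index [Finite α] {G : Subgroup (Perm α)} [IsPretransitive G α] {B : Set α}
    (hB : IsBlock G B) (hne : B.Nonempty) :
    (orbit G B).ncard.uniformBell B.ncard ∣ G.index := by
  obtain ⟨f, hf⟩ := exists_mulActionHom_orbit_of_isBlock hB hne
  have card_fiber (C : orbit G B) : Nat.card {x // f x = C} = B.ncard := by
    obtain ⟨_, g, rfl⟩ := C
    simp_rw [hf]
    exact Set.ncard_smul_set g B
  obtain ⟨k, hk⟩ := card_dvd_of_mulActionHom f card_fiber
  rw [Nat.card_coe_set_eq] at hk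
  have hcard : G.index * Nat.card G = (Nat.card α)! := by
    rw [G.index_mul_card, Nat.card_perm]
  rw [← hB.ncard_block_mul_ncard_orbit_eq hne, mul_comm (B.ncard),
    ← Nat.uniformBell_mul_eq _ hne.ncard_pos.ne', mul_assoc, hk] at hcard
  refine ⟨k, Nat.eq_of_mul_eq_mul_right (Nat.card_pos (α := G)) ?_⟩
  rw [hcard]
  ring

theorem exists_isBlock_of_not_isPreprimitive [IsPretransitive G α] [Finite α]
    (hprim : ¬ IsPreprimitive G α) :
    ∃ B : Set α, IsBlock G B ∧ 2 ≤ B.ncard ∧ 2 ≤ (orbit G B).ncard := by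
  obtain ⟨B, hB, hBtriv⟩ : ∃ B : Set α, IsBlock G B ∧ ¬ IsTrivialBlock B := by
    by_contra! h
    exact hprim ⟨h _⟩
  obtain ⟨hBnontriv, hBuniv⟩ := not_or.1 hBtriv
  rw [Set.not_subsingleton_iff] at hBnontriv
  refine ⟨B, hB, Set.one_lt_ncard_iff_nontrivial.2 hBnontriv, ?_⟩
  by_contra! hlt
  have card_eq : B.ncard * (orbit G B).ncard = Nat.card α :=
    hB.ncard_block_mul_ncard_orbit_eq hBnontriv.nonempty
  have ncard_pos : 0 < B.ncard := (Set.ncard_pos (Set.toFinite B)).2 hBnontriv.nonempty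
  exact hBuniv (hB.eq_univ_of_card_lt (by nlinarith))

theorem choose_two_le_index_of_not_isPreprimitive [Finite α] {G : Subgroup (Perm α)}
    [IsPretransitive G α] (hα : 7 ≤ Nat.card α) (hprim : ¬ IsPreprimitive G α) :
    (Nat.card α).choose 2 ≤ G.index := by
  obtain ⟨B, hB, hB2, horbit⟩ := exists_isBlock_of_not_isPreprimitive hprim
  have hne : B.Nonempty := Set.nonempty_of_ncard_ne_zero (by lia)
  have card_eq : (orbit G B).ncard * B.ncard = Nat.card α := by
    rw [mul_comm, hB.ncard_block_mul_ncard_orbit_eq hne]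
  rw [← card_eq] at hα ⊢
  exact (choose_two_le_uniformBell hB2 horbit hα).trans
    (Nat.le_of_dvd (Nat.pos_of_ne_zero G.index_ne_zero_of_finite) (uniformBell_dvd_index hB hne))

end Imprimitive

section FixedPoint

variable {α : Type*}

theorem alternatingGroup_le_of_index_lt_card [Fintype α] [DecidableEq α] (hα : 5 ≤ Nat.card α)
    {K : Subgroup (Perm α)} (hK : K.index < Nat.card α) : alternatingGroup α ≤ K := by
  have core_ne_bot : K.normalCore ≠ ⊥ := by
    intro hbot
    have core_index : K.normalCore.index ≤ K.index ! := by
      rw [K.normalCore_eq_ker, Subgroup.index_ker]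
      exact (Subgroup.card_le_card_group _).trans_eq (Nat.card_perm)
    rw [hbot, Subgroup.index_bot, Nat.card_perm] at core_index
    exact core_index.not_gt
      (Nat.factorial_lt_of_lt (Nat.pos_of_ne_zero K.index_ne_zero_of_finite) hK)
  exact (Perm.alternatingGroup_le_of_normal hα
    ((Subgroup.nontrivial_iff_ne_bot _).2 core_ne_bot)).trans K.normalCore_le

theorem eq_top_or_eq_alternatingGroup_of_le [Fintype α] [DecidableEq α] [Nontrivial α]
    {K : Subgroup (Perm α)} (hK : alternatingGroup α ≤ K) : K = ⊤ ∨ K = alternatingGroup α := by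
  have hdvd : K.index ∣ (alternatingGroup α).index := Subgroup.index_dvd_of_le hK
  rw [alternatingGroup.index_eq_two, Nat.dvd_prime Nat.prime_two, Subgroup.index_eq_one] at hdvd
  exact hdvd.imp_right Perm.eq_alternatingGroup_of_index_eq_two

theorem range_ofSubtype_ne [DecidableEq α] (i : α) :
    (Perm.ofSubtype : Perm {x // x ≠ i} →* Perm α).range = stabilizer (Perm α) i := by
  ext g
  constructor
  · rintro ⟨σ, rfl⟩
    exact Perm.ofSubtype_apply_of_not_mem σ (not_not.2 rfl)
  · intro (hg : g i = i)
    have ne_iff (x : α) : g x ≠ i ↔ x ≠ i := by rw [← hg, g.injective.ne_iff, hg]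
    exact ⟨g.subtypePerm ne_iff, Perm.ofSubtype_subtypePerm ne_iff fun x hx hxi =>
      hx (hxi ▸ hg)⟩

theorem index_comap_ofSubtype_mul_card [DecidableEq α] {G : Subgroup (Perm α)} {i : α}
    (hi : ∀ σ ∈ G, σ i = i) :
    (G.comap (Perm.ofSubtype : Perm {x // x ≠ i} →* Perm α)).index * Nat.card α = G.index := by
  rw [Subgroup.index_comap, range_ofSubtype_ne, ← index_stabilizer_of_transitive (Perm α) i]
  exact Subgroup.relIndex_mul_index hi

theorem index_eq_or_choose_two_le_of_fixed [Finite α] (hα : 6 ≤ Nat.card α)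
    {G : Subgroup (Perm α)} {i : α} (hi : ∀ σ ∈ G, σ i = i) :
    (G.index = Nat.card α ∨ G.index = 2 * Nat.card α) ∨ (Nat.card α).choose 2 ≤ G.index := by
  classical
  cases nonempty_fintype α
  have card_ne : Nat.card {x // x ≠ i} + 1 = Nat.card α := by
    have := Set.ncard_add_ncard_compl ({i} : Set α)
    rwa [Set.ncard_singleton, add_comm] at this
  have : Nontrivial {x // x ≠ i} := Finite.one_lt_card_iff_nontrivial.1 (by lia)
  rw [← index_comap_ofSubtype_mul_card hi]
  set K := G.comap (Perm.ofSubtype : Perm {x // x ≠ i} →* Perm α)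
  rcases lt_or_ge K.index (Nat.card {x // x ≠ i}) with hlt | hge
  · left
    have hK : alternatingGroup {x // x ≠ i} ≤ K :=
      alternatingGroup_le_of_index_lt_card (by lia) hlt
    rcases eq_top_or_eq_alternatingGroup_of_le hK with h | h
    · left; rw [h, Subgroup.index_top, one_mul]
    · right; rw [h, alternatingGroup.index_eq_two]
  · right
    rw [Nat.choose_two_right, mul_comm K.index]
    exact (Nat.div_le_self _ _).trans (Nat.mul_le_mul_left _ (by lia))

end FixedPoint

theorem index_dichotomy_subgroup_general {α : Type*} [Fintype α] [DecidableEq α]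
    (hα : 9 ≤ Nat.card α) (G : Subgroup (Perm α)) (hG1 : G ≠ ⊤) (hG2 : G ≠ alternatingGroup α) :
    ((G.index = Nat.card α ∨ G.index = 2 * Nat.card α) ∧ ∃ i : α, ∀ σ ∈ G, σ i = i) ∨
      (Nat.card α).choose 2 ≤ G.index := by
  rcases (fixedPoints G α).eq_empty_or_nonempty with hfix | ⟨i, hi⟩
  · right
    by_cases htrans : IsPretransitive G α
    · by_cases hprim : IsPreprimitive G α
      · have : Nontrivial α := Finite.one_lt_card_iff_nontrivial.1 (by lia)
        refine choose_two_le_index_of_isPreprimitive hα fun hG => ?_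
        exact (eq_top_or_eq_alternatingGroup_of_le hG).elim hG1 hG2
      · exact choose_two_le_index_of_not_isPreprimitive (by lia) hprim
    · exact choose_two_le_index_of_not_isPretransitive hfix htrans
  · have fixes_i : ∀ σ ∈ G, σ i = i := fun σ hσ => hi ⟨σ, hσ⟩
    exact (index_eq_or_choose_two_le_of_fixed (by lia) fixes_i).imp_left (⟨·, i, fixes_i⟩)

/-- For `n ≥ 9`, every subgroup `G` of `Sₙ` other than `Sₙ` and `Aₙ` either has index `n` or
`2n` in `Sₙ` and fixes some element of `{1, …, n}`, or has index at least `n(n-1)/2` in `Sₙ`. -/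
theorem index_dichotomy_subgroup (n : ℕ) (hn : 9 ≤ n)
    (G : Subgroup (Equiv.Perm (Fin n)))
    (hG1 : G ≠ ⊤) (hG2 : G ≠ alternatingGroup (Fin n)) :
    ((G.index = n ∨ G.index = 2 * n) ∧ ∃ i : Fin n, ∀ σ ∈ G, σ i = i) ∨
      n * (n - 1) / 2 ≤ G.index := by
  simpa only [Nat.choose_two_right, Nat.card_fin] using
    index_dichotomy_subgroup_general (hn.trans_eq (Nat.card_fin n).symm) G hG1 hG2
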